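/- arXiv:2410.24158 — 2 statements merged into one kernel-verified Lean document; each statement's English description precedes it below -/
import Mathlib

section
/- Let 2 ≤ p < s be reals, λ > 0, R > 0, and let k, d be integers with 1 ≤ k ≤ d. Define the Nemirovskii instance g_k : ℝ^d → ℝ by g_k(x) = β_k · max_{1 ≤ i ≤ k} (x_i − i·α_k), where β_k = ((s−1)/s)^{2(s−1)} · s λ R^{s−1} / (k+1)^{(p+1)(s−1)/p} and α_k = (s−1)R / (s (k+1)^{(p+1)/p}). Then every x ∈ ℝ^d with ‖x‖_p ≤ R and x_i = 0 for all i ≥ k satisfies g_k(x) − inf_{‖y‖_p ≤ R} g_k(y) ≥ λ R^s / (16 (k+1)^{(s(p+1)−p)/p}). -/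
/-!
Write `K = k + 1` and `c = (s - 1) / s`. The last term of the maximum gives
`g x ≥ -β k α`, because `x_k = 0`. The point `y` whose first `k` coordinates equal `-R / K^(1/p)`
and whose other coordinates vanish lies in the `ℓ_p` ball of radius `R`, and
`g y ≤ β (-R / K^(1/p) - α)`. As `α = c R / (K · K^(1/p))`, the gap is at least
`β (R / K^(1/p)) (1 - c (k - 1) / K) ≥ β (R / K^(1/p)) / s`, and the powers of `K`, `R` and `s`
in this bound combine to `c^(2(s-1)) λ R^s / K^((s(p+1)-p)/p)`. Finally `c^(2(s-1)) ≥ e⁻² ≥ 1/16`,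
since `(1 + 1/(s-1))^(s-1) ≤ e`. The infimum is a genuine one because `g` is bounded below on the
ball: `|y_i| ≤ ‖y‖_p` (`abs_le_lpNorm`).
-/


open Finset

/-- The ℓ_p "norm" for real exponent p: ‖x‖_p = (Σ_i |x_i|^p)^(1/p). -/
noncomputable def lpNorm {d : ℕ} (p : ℝ) (x : Fin d → ℝ) : ℝ :=
  (∑ i, |x i| ^ p) ^ (1 / p)

lemma abs_le_lpNorm {d : ℕ} {p : ℝ} (hp : 0 < p) (y : Fin d → ℝ) (i : Fin d) :
    |y i| ≤ lpNorm p y := by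
  have h1 : |y i| ^ p ≤ ∑ j, |y j| ^ p :=
    Finset.single_le_sum (f := fun j => |y j| ^ p)
      (fun j _ => Real.rpow_nonneg (abs_nonneg _) _) (Finset.mem_univ i)
  calc |y i| = (|y i| ^ p) ^ (1 / p) := by
        rw [← Real.rpow_mul (abs_nonneg _), mul_one_div_cancel hp.ne', Real.rpow_one]
    _ ≤ lpNorm p y :=
        Real.rpow_le_rpow (Real.rpow_nonneg (abs_nonneg _) _) h1 (by positivity)

/-- The power `((s-1)/s)^(2(s-1))` is the inverse square of `(1 + 1/(s-1))^(s-1) ≤ e`. -/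
lemma one_div_sixteen_le_rpow {s : ℝ} (hs : 1 < s) :
    1 / 16 ≤ ((s - 1) / s) ^ (2 * (s - 1)) := by
  have h0 : 0 < s - 1 := by linarith
  have hc : 0 < (s - 1) / s := by positivity
  have hlog : -(1 / (s - 1)) ≤ Real.log ((s - 1) / s) := by
    have h := Real.one_sub_inv_le_log_of_pos hc
    have e : 1 - ((s - 1) / s)⁻¹ = -(1 / (s - 1)) := by field_simp; ring
    linarith
  have h2 : -2 ≤ Real.log ((s - 1) / s) * (2 * (s - 1)) := by
    have h := mul_le_mul_of_nonneg_right hlog (by positivity : 0 ≤ 2 * (s - 1))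
    have e : -(1 / (s - 1)) * (2 * (s - 1)) = -2 := by field_simp
    linarith
  rw [Real.rpow_def_of_pos hc]
  refine le_trans ?_ (Real.exp_le_exp.mpr h2)
  have e : Real.exp (-2) = (Real.exp 1 ^ 2)⁻¹ := by
    rw [Real.exp_neg, ← Real.exp_nat_mul]; norm_num
  rw [e, one_div]
  have h3 := Real.exp_one_lt_d9
  have h4 := Real.exp_pos 1
  gcongr
  nlinarith

/-- The constant vector `-R / (k+1)^(1/p)` on the first `k` coordinates lies in the `ℓ_p` ball of
radius `R`, as `k / (k+1) ≤ 1`. -/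
lemma lpNorm_witness_le {k d : ℕ} {p R : ℝ} (hp : 0 < p) (hR : 0 < R) :
    lpNorm p (fun j : Fin d => if (j : ℕ) < k then -(R / ((k : ℝ) + 1) ^ (1 / p)) else 0) ≤ R := by
  have hK : (0 : ℝ) < (k : ℝ) + 1 := by positivity
  have hterm : ∀ j : Fin d,
      |if (j : ℕ) < k then -(R / ((k : ℝ) + 1) ^ (1 / p)) else 0| ^ p
        = if (j : ℕ) < k then R ^ p / ((k : ℝ) + 1) else 0 := by
    intro j
    split_ifs
    · rw [abs_neg, abs_of_pos (by positivity), Real.div_rpow hR.le (by positivity),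
        ← Real.rpow_mul hK.le, one_div_mul_cancel hp.ne', Real.rpow_one]
    · rw [abs_zero, Real.zero_rpow hp.ne']
  have hsum : ∑ j : Fin d, |if (j : ℕ) < k then -(R / ((k : ℝ) + 1) ^ (1 / p)) else 0| ^ p
      ≤ R ^ p := by
    rw [Finset.sum_congr rfl (fun j _ => hterm j), ← Finset.sum_filter, Finset.sum_const,
      nsmul_eq_mul, mul_div_assoc', div_le_iff₀ hK, mul_comm]
    have hcard : (#{j : Fin d | (j : ℕ) < k} : ℝ) ≤ (k : ℝ) + 1 := by
      have h : #{j : Fin d | (j : ℕ) < k} ≤ k := by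
        rw [Fin.card_filter_val_lt]; exact min_le_right _ _
      have h' : (#{j : Fin d | (j : ℕ) < k} : ℝ) ≤ (k : ℝ) := by exact_mod_cast h
      linarith
    gcongr
  calc lpNorm p _ ≤ (R ^ p) ^ (1 / p) :=
        Real.rpow_le_rpow (Finset.sum_nonneg fun j _ => Real.rpow_nonneg (abs_nonneg _) _) hsum
          (by positivity)
    _ = R := by rw [← Real.rpow_mul hR.le, mul_one_div_cancel hp.ne', Real.rpow_one]

theorem stmt16 {k d : ℕ} (hk : 1 ≤ k) (hkd : k ≤ d)
    (p s lam R : ℝ) (hp : 2 ≤ p) (hps : p < s) (hlam : 0 < lam) (hR : 0 < R)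
    (βk αk : ℝ)
    (hβk : βk = ((s - 1) / s) ^ (2 * (s - 1)) * s * lam * R ^ (s - 1)
      / ((k : ℝ) + 1) ^ ((p + 1) * (s - 1) / p))
    (hαk : αk = (s - 1) * R / (s * ((k : ℝ) + 1) ^ ((p + 1) / p)))
    (g : (Fin d → ℝ) → ℝ)
    -- Nemirovskii instance g_k(x) = β_k · max_{1 ≤ i ≤ k} (x_i − i·α_k)
    (hg : ∀ x, g x = βk * ⨆ i : Fin k, (x (Fin.castLE hkd i) - ((i : ℕ) + 1) * αk))
    (x : Fin d → ℝ) (hxR : lpNorm p x ≤ R)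
    -- x_i = 0 for all (1-indexed) coordinates i ≥ k
    (hsupp : ∀ j : Fin d, k ≤ (j : ℕ) + 1 → x j = 0) :
    lam * R ^ s / (16 * ((k : ℝ) + 1) ^ ((s * (p + 1) - p) / p))
      ≤ g x - sInf (g '' {y | lpNorm p y ≤ R}) := by
  have hp0 : 0 < p := by linarith
  have hs1 : 1 < s := by linarith
  have hs0 : 0 < s := by linarith
  have hsm : 0 < s - 1 := by linarith
  have hK : (0 : ℝ) < (k : ℝ) + 1 := by positivity
  have hk1 : (1 : ℝ) ≤ k := by exact_mod_cast hk
  set u : ℝ := ((k : ℝ) + 1) ^ (1 / p) with hu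
  have hu0 : 0 < u := by positivity
  have hβ0 : 0 < βk := by rw [hβk]; positivity
  have hα : αk = (s - 1) * R / (s * (((k : ℝ) + 1) * u)) := by
    rw [hαk, hu]
    congr 2
    rw [show (p + 1) / p = 1 + 1 / p by field_simp, Real.rpow_add hK, Real.rpow_one]
  have hα0 : 0 < αk := by rw [hα]; positivity
  have : Nonempty (Fin k) := ⟨⟨0, hk⟩⟩
  have hbdd : ∀ z : Fin d → ℝ, BddAbove (Set.range fun i : Fin k =>
      (z (Fin.castLE hkd i) - ((i : ℕ) + 1) * αk)) := fun z => (Set.finite_range _).bddAbove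
  -- The term of index `k` in the maximum vanishes up to its shift.
  have hgx : βk * (-(k * αk)) ≤ g x := by
    rw [hg]
    refine mul_le_mul_of_nonneg_left ?_ hβ0.le
    have h := le_ciSup (hbdd x) ⟨k - 1, by omega⟩
    refine le_trans (le_of_eq ?_) h
    have h0 : x (Fin.castLE hkd ⟨k - 1, by omega⟩) = 0 := hsupp _ (by simp; omega)
    simp only [h0]
    rw [Nat.cast_sub hk]
    push_cast
    ring
  have hbelow : BddBelow (g '' {y | lpNorm p y ≤ R}) := by
    refine ⟨βk * (-R - αk), ?_⟩
    rintro _ ⟨y, hy, rfl⟩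
    rw [hg]
    refine mul_le_mul_of_nonneg_left ?_ hβ0.le
    refine le_trans ?_ (le_ciSup (hbdd y) ⟨0, hk⟩)
    have h := (abs_le.mp ((abs_le_lpNorm hp0 y (Fin.castLE hkd ⟨0, hk⟩)).trans hy)).1
    simp only [Nat.cast_zero]
    linarith
  have hinf : sInf (g '' {y | lpNorm p y ≤ R}) ≤ βk * (-(R / u) - αk) := by
    refine (csInf_le hbelow ⟨_, lpNorm_witness_le (k := k) hp0 hR, rfl⟩).trans ?_
    rw [hg]
    refine mul_le_mul_of_nonneg_left (ciSup_le fun i => ?_) hβ0.le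
    simp only [Fin.val_castLE, i.isLt, if_true]
    have : 0 ≤ ((i : ℕ) : ℝ) * αk := by positivity
    linarith
  have hgap : R / u / s ≤ R / u - (k - 1) * αk := by
    have e : R / u - (k - 1) * αk - R / u / s = R / u * ((s - 1) / s) * (2 / ((k : ℝ) + 1)) := by
      rw [hα]; field_simp; ring
    have : 0 ≤ R / u * ((s - 1) / s) * (2 / ((k : ℝ) + 1)) := by positivity
    linarith
  have hmain : βk * (R / u / s) = ((s - 1) / s) ^ (2 * (s - 1)) *
      (lam * R ^ s / ((k : ℝ) + 1) ^ ((s * (p + 1) - p) / p)) := by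
    have e1 : ((k : ℝ) + 1) ^ ((s * (p + 1) - p) / p)
        = ((k : ℝ) + 1) ^ ((p + 1) * (s - 1) / p) * u := by
      rw [hu, ← Real.rpow_add hK]; congr 1; field_simp; ring
    have e2 : R ^ s = R ^ (s - 1) * R := by
      rw [← Real.rpow_add_one hR.ne']; congr 1; ring
    rw [hβk, e1, e2]
    field_simp
  have hQ : 0 ≤ lam * R ^ s / ((k : ℝ) + 1) ^ ((s * (p + 1) - p) / p) := by positivity
  calc lam * R ^ s / (16 * ((k : ℝ) + 1) ^ ((s * (p + 1) - p) / p))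
      = 1 / 16 * (lam * R ^ s / ((k : ℝ) + 1) ^ ((s * (p + 1) - p) / p)) := by
        field_simp
    _ ≤ βk * (R / u / s) := by
        rw [hmain]; exact mul_le_mul_of_nonneg_right (one_div_sixteen_le_rpow hs1) hQ
    _ ≤ βk * (R / u - (k - 1) * αk) := mul_le_mul_of_nonneg_left hgap hβ0.le
    _ ≤ g x - sInf (g '' {y | lpNorm p y ≤ R}) := by linarith
end

section
/- Let p ≥ 2 be a real number, r > 0 and α ≥ 4r reals, and let k, d be integers with 1 ≤ k ≤ d. Define g : ℝ^d → ℝ by g(x) = max_{1 ≤ j ≤ k} (x_j − j·α). Then for every integer i with 1 ≤ i ≤ k and every c ∈ ℝ^d with c_j = 0 for all j ≥ i, the function g has a unique minimizer x' over the ball {x : ‖x − c‖_p ≤ r}, this minimizer satisfies ‖x' − c‖_p = r, and x'_j = 0 for all j > i. In particular, the unique minimizer of g over {x : ‖x‖_p ≤ r} is −r·e_1, where e_1 is the first standard basis vector. -/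
/-!
The minimizer over the ball is found by water-filling. For a level `t`, the sublevel set
`{g ≤ t}` is the orthant `{y | y_j ≤ t + j α for all j ≤ k}`, and truncating `c` coordinatewise
at these heights (`truncAt`) gives the point of that orthant which is closest to `c` in every
coordinate simultaneously. Hence, if `t` is such that the truncation is at distance exactly `r`
from `c`, a point of the ball lying in the orthant must agree with the truncation in every
coordinate (`eq_truncAt`), so the truncation is the unique minimizer (`truncAt_unique_min`).

Such a level exists within `r` below `g c`, by the intermediate value theorem (`exists_level`).
Since `g c ≥ -i α` and `r ≤ α`, it is at least `-(i+1) α`, so coordinates after the `i`-th, which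
vanish in `c`, are left untouched. For `c = 0` the level is `-r - α`, and the truncation
is `-r e₁`.
-/

open Finset

/-- The truncation of `c` at level `t`: for `j < k` (counting from zero) the coordinate `c j` is
capped at `t + (j + 1) α`, and the remaining coordinates are kept. -/
noncomputable def truncAt {d : ℕ} (k : ℕ) (α : ℝ) (c : Fin d → ℝ) (t : ℝ) : Fin d → ℝ :=
  fun j => if (j : ℕ) < k then min (c j) (t + ((j : ℕ) + 1) * α) else c j

lemma lpNorm_le_iff {d : ℕ} {p r : ℝ} (hp : 0 < p) (hr : 0 ≤ r) (x : Fin d → ℝ) :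
    lpNorm p x ≤ r ↔ ∑ i, |x i| ^ p ≤ r ^ p := by
  have h0 : 0 ≤ ∑ i, |x i| ^ p := Finset.sum_nonneg fun i _ => by positivity
  rw [lpNorm, one_div, Real.rpow_inv_le_iff_of_pos h0 hr hp]

lemma lpNorm_eq_of_sum {d : ℕ} {p r : ℝ} (hp : 0 < p) (hr : 0 ≤ r) {x : Fin d → ℝ}
    (h : ∑ i, |x i| ^ p = r ^ p) : lpNorm p x = r := by
  rw [lpNorm, h, one_div, Real.rpow_rpow_inv hr hp.ne']

/-- The truncation at level `t` is the only point of the ball satisfying the constraints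
`y_j ≤ t + (j + 1) α`, provided it lies on the sphere: it is coordinatewise closest to `c` among
such points, so all the coordinatewise inequalities are equalities. -/
lemma eq_truncAt {k d : ℕ} {p r α t : ℝ} (hp : 0 < p) (hr : 0 ≤ r) {c y : Fin d → ℝ}
    (hsum : ∑ j, |(truncAt k α c t - c) j| ^ p = r ^ p)
    (hy : lpNorm p (y - c) ≤ r)
    (hyt : ∀ j : Fin d, (j : ℕ) < k → y j ≤ t + ((j : ℕ) + 1) * α) :
    y = truncAt k α c t := by
  rw [lpNorm_le_iff hp hr, ← hsum] at hy
  have habs : ∀ j, |(truncAt k α c t - c) j| ≤ |(y - c) j| := by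
    intro j
    simp only [truncAt, Pi.sub_apply]
    split_ifs with hj
    · have := hyt j hj
      rcases le_total (c j) (t + ((j : ℕ) + 1) * α) with h | h
      · simp [min_eq_left h]
      · rw [min_eq_right h, abs_of_nonpos (by linarith), abs_of_nonpos (by linarith)]
        linarith
    · simp
  have hle : ∀ j ∈ (Finset.univ : Finset (Fin d)),
      |(truncAt k α c t - c) j| ^ p ≤ |(y - c) j| ^ p := fun j _ =>
    Real.rpow_le_rpow (abs_nonneg _) (habs j) hp.le
  have heq := (Finset.sum_eq_sum_iff_of_le hle).1 (le_antisymm (Finset.sum_le_sum hle) hy)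
  funext j
  have hj := (Real.rpow_left_inj (abs_nonneg _) (abs_nonneg _) hp.ne').1 (heq j (mem_univ j))
  simp only [truncAt, Pi.sub_apply] at hj ⊢
  split_ifs at hj ⊢ with hjk
  · have := hyt j hjk
    rcases le_total (c j) (t + ((j : ℕ) + 1) * α) with h | h
    · rw [min_eq_left h, sub_self, abs_zero, eq_comm, abs_eq_zero] at hj
      rw [min_eq_left h]; linarith
    · rw [min_eq_right h, abs_of_nonpos (by linarith), abs_of_nonpos (by linarith)] at hj
      rw [min_eq_right h]; linarith
  · rw [sub_self, abs_zero, eq_comm, abs_eq_zero] at hj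
    linarith

lemma g_le_iff {k d : ℕ} (hk : 1 ≤ k) (hkd : k ≤ d) {α : ℝ} {g : (Fin d → ℝ) → ℝ}
    (hg : ∀ x, g x = ⨆ j : Fin k, (x (Fin.castLE hkd j) - ((j : ℕ) + 1) * α))
    (y : Fin d → ℝ) (t : ℝ) :
    g y ≤ t ↔ ∀ j : Fin d, (j : ℕ) < k → y j ≤ t + ((j : ℕ) + 1) * α := by
  have : Nonempty (Fin k) := ⟨⟨0, hk⟩⟩
  rw [hg, ciSup_le_iff (Set.finite_range _).bddAbove]
  constructor
  · intro h j hj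
    have := h ⟨j, hj⟩
    have e : Fin.castLE hkd ⟨j, hj⟩ = j := rfl
    rw [e] at this
    simp only at this
    linarith
  · intro h j
    have := h (Fin.castLE hkd j) j.2
    simp only [Fin.val_castLE] at this
    linarith

lemma truncAt_unique_min {k d : ℕ} (hk : 1 ≤ k) (hkd : k ≤ d) {p r α t : ℝ} (hp : 0 < p)
    (hr : 0 ≤ r) {g : (Fin d → ℝ) → ℝ}
    (hg : ∀ x, g x = ⨆ j : Fin k, (x (Fin.castLE hkd j) - ((j : ℕ) + 1) * α))
    {c : Fin d → ℝ} (hsum : ∑ j, |(truncAt k α c t - c) j| ^ p = r ^ p) :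
    (∀ y, lpNorm p (y - c) ≤ r → g (truncAt k α c t) ≤ g y) ∧
      ∀ z, lpNorm p (z - c) ≤ r → (∀ y, lpNorm p (y - c) ≤ r → g z ≤ g y) →
        z = truncAt k α c t := by
  have hgt : g (truncAt k α c t) ≤ t := by
    rw [g_le_iff hk hkd hg]
    intro j hj
    simp only [truncAt, if_pos hj]
    exact min_le_right _ _
  have key : ∀ y, lpNorm p (y - c) ≤ r → g y ≤ t → y = truncAt k α c t := fun y hy hyt =>
    eq_truncAt hp hr hsum hy ((g_le_iff hk hkd hg y t).1 hyt)
  constructor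
  · intro y hy
    rcases le_or_gt (g y) t with h | h
    · rw [key y hy h]
    · linarith
  · intro z hz hmin
    exact key z hz ((hmin _ (lpNorm_eq_of_sum hp hr hsum).le).trans hgt)

/-- A level `t` at which the truncation of `c` lies on the sphere of radius `r` around `c`. It can
be taken at most `r` below the maximum of `c_j - (j + 1) α` over `j < k`. -/
lemma exists_level {k d : ℕ} (hk : 1 ≤ k) (hkd : k ≤ d) {p r α : ℝ} (hp : 0 < p) (hr : 0 ≤ r)
    (c : Fin d → ℝ) :
    ∃ t, ∑ j, |(truncAt k α c t - c) j| ^ p = r ^ p ∧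
      ∀ j : Fin d, (j : ℕ) < k → c j - ((j : ℕ) + 1) * α - r ≤ t := by
  have : Nonempty (Fin k) := ⟨⟨0, hk⟩⟩
  obtain ⟨m, hm⟩ := Finite.exists_max
    (fun j : Fin k => c (Fin.castLE hkd j) - ((j : ℕ) + 1) * α)
  set M := c (Fin.castLE hkd m) - ((m : ℕ) + 1) * α with hM
  have hmax : ∀ j : Fin d, (j : ℕ) < k → c j - ((j : ℕ) + 1) * α ≤ M := fun j hj => hm ⟨j, hj⟩
  have hcont : Continuous fun t => ∑ j, |(truncAt k α c t - c) j| ^ p := by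
    refine continuous_finsetSum _ fun j _ => Continuous.rpow_const ?_ fun _ => Or.inr hp.le
    simp only [truncAt, Pi.sub_apply]
    split_ifs <;> fun_prop
  have hmem : r ^ p ∈ Set.Icc (∑ j, |(truncAt k α c M - c) j| ^ p)
      (∑ j, |(truncAt k α c (M - r) - c) j| ^ p) := by
    constructor
    -- no coordinate exceeds its cap at level `M`
    · have h0 : ∀ j, (truncAt k α c M - c) j = 0 := by
        intro j
        simp only [truncAt, Pi.sub_apply]
        split_ifs with hj
        · rw [min_eq_left (by linarith [hmax j hj]), sub_self]
        · simp
      simp only [h0, abs_zero, Real.zero_rpow hp.ne', Finset.sum_const_zero]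
      positivity
    -- at level `M - r` the maximizing coordinate alone moves by `r`
    · have h1 : |(truncAt k α c (M - r) - c) (Fin.castLE hkd m)| = r := by
        simp only [truncAt, Pi.sub_apply, Fin.val_castLE, if_pos m.2]
        rw [min_eq_right (by linarith), abs_of_nonpos (by linarith)]
        linarith
      calc r ^ p = |(truncAt k α c (M - r) - c) (Fin.castLE hkd m)| ^ p := by rw [h1]
        _ ≤ _ := Finset.single_le_sum (f := fun j => |(truncAt k α c (M - r) - c) j| ^ p)
          (fun j _ => by positivity) (mem_univ _)
  obtain ⟨t, ht, hts⟩ := intermediate_value_Icc' (by linarith : M - r ≤ M) hcont.continuousOn hmem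
  exact ⟨t, hts, fun j hj => by linarith [hmax j hj, ht.1]⟩

theorem stmt18 {k d : ℕ} (hk : 1 ≤ k) (hkd : k ≤ d)
    (p r α : ℝ) (hp : 2 ≤ p) (hr : 0 < r) (hα : 4 * r ≤ α)
    (g : (Fin d → ℝ) → ℝ)
    -- g(x) = max_{1 ≤ j ≤ k} (x_j − j·α), with 1-indexed coordinates
    (hg : ∀ x, g x = ⨆ j : Fin k, (x (Fin.castLE hkd j) - ((j : ℕ) + 1) * α)) :
    -- zero-chain property of the ball oracle
    (∀ i : ℕ, 1 ≤ i → i ≤ k →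
      ∀ c : Fin d → ℝ, (∀ j : Fin d, i ≤ (j : ℕ) + 1 → c j = 0) →
        ∃ x' : Fin d → ℝ,
          (lpNorm p (x' - c) ≤ r ∧ ∀ y, lpNorm p (y - c) ≤ r → g x' ≤ g y) ∧
          (∀ z, lpNorm p (z - c) ≤ r →
            (∀ y, lpNorm p (y - c) ≤ r → g z ≤ g y) → z = x') ∧
          lpNorm p (x' - c) = r ∧
          (∀ j : Fin d, i < (j : ℕ) + 1 → x' j = 0)) ∧
    -- in particular: −r·e₁ is the unique minimizer of g over {‖x‖_p ≤ r}
    ((lpNorm p (fun j : Fin d => if (j : ℕ) = 0 then -r else 0) ≤ r ∧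
        ∀ y, lpNorm p y ≤ r →
          g (fun j : Fin d => if (j : ℕ) = 0 then -r else 0) ≤ g y) ∧
      ∀ z, lpNorm p z ≤ r → (∀ y, lpNorm p y ≤ r → g z ≤ g y) →
        z = fun j : Fin d => if (j : ℕ) = 0 then -r else 0) := by
  have hp0 : 0 < p := by linarith
  have hα0 : 0 < α := by linarith
  refine ⟨?_, ?_⟩
  · intro i hi hik c hc
    obtain ⟨t, hsum, ht⟩ := exists_level hk hkd (α := α) hp0 hr.le c
    obtain ⟨hmin, huniq⟩ := truncAt_unique_min hk hkd hp0 hr.le hg hsum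
    have hnorm := lpNorm_eq_of_sum hp0 hr.le hsum
    refine ⟨truncAt k α c t, ⟨hnorm.le, hmin⟩, huniq, hnorm, ?_⟩
    intro j hj
    have hcj : c j = 0 := hc j hj.le
    -- the `i`-th coordinate of `c` vanishes, so `t ≥ -i α - r ≥ -(i + 1) α`
    have hti := ht ⟨i - 1, by omega⟩ (by simp only; omega)
    rw [hc ⟨i - 1, by omega⟩ (by simp only; omega)] at hti
    have hcast : ((i - 1 : ℕ) : ℝ) + 1 = i := by
      rw [Nat.cast_sub hi]; push_cast; ring
    simp only [hcast] at hti
    have hij : (i : ℝ) + 1 ≤ (j : ℕ) + 1 := by exact_mod_cast (by omega : i + 1 ≤ (j : ℕ) + 1)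
    have hmul := mul_le_mul_of_nonneg_right hij hα0.le
    simp only [truncAt, hcj]
    split_ifs
    · exact min_eq_left (by linarith)
    · rfl
  · have hW : (fun j : Fin d => if (j : ℕ) = 0 then -r else 0)
        = truncAt k α (0 : Fin d → ℝ) (-r - α) := by
      funext j
      simp only [truncAt, Pi.zero_apply]
      by_cases hj : (j : ℕ) = 0
      · rw [if_pos hj, if_pos (by omega), hj, min_eq_right] <;> push_cast <;> linarith
      · rw [if_neg hj]
        have h2 : (2 : ℝ) ≤ (j : ℕ) + 1 := by exact_mod_cast (by omega : 2 ≤ (j : ℕ) + 1)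
        have hmul := mul_le_mul_of_nonneg_right h2 hα0.le
        split_ifs
        · rw [min_eq_left (by linarith)]
        · rfl
    have hsum : ∑ j, |(truncAt k α (0 : Fin d → ℝ) (-r - α) - 0) j| ^ p = r ^ p := by
      rw [← hW, Finset.sum_eq_single (⟨0, by omega⟩ : Fin d)]
      · simp [abs_of_pos hr]
      · intro j _ hj
        have hj0 : (j : ℕ) ≠ 0 := fun h => hj (Fin.ext h)
        simp [hj0, Real.zero_rpow hp0.ne']
      · simp
    have hnorm := lpNorm_eq_of_sum hp0 hr.le hsum
    have hmain := truncAt_unique_min hk hkd hp0 hr.le hg hsum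
    rw [hW]
    simp only [sub_zero] at hnorm hmain
    exact ⟨⟨hnorm.le, hmain.1⟩, hmain.2⟩
end
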